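/- Clifford invariance of the stabilizer Rényi quantity: let n be a natural number, α ≥ 1 an integer, and C a unitary matrix indexed by (Fin n → Fin 2) (C ∈ Matrix.unitaryGroup) such that for every s : Fin n → Fin 4 there exist t : Fin n → Fin 4 and c ∈ ({1, -1, Complex.I, -Complex.I} : Set ℂ) with C * P_s * Cᴴ = c • P_t. Then for every unit vector ψ : (Fin n → Fin 2) → ℂ, A_α(C.mulVec ψ) = A_α(ψ). -/

import Mathlib

open Complex Matrix BigOperators

/-- The single-qubit Pauli matrices `Q₀ = 1`, `Q₁ = X`, `Q₂ = Y`, `Q₃ = Z`. -/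
noncomputable def Q : Fin 4 → Matrix (Fin 2) (Fin 2) ℂ :=
  ![1, !![0, 1; 1, 0], !![0, -Complex.I; Complex.I, 0], !![1, 0; 0, -1]]

/-- The `n`-qubit Pauli string `P_s`, the Kronecker product of the `Q (s k)`. -/
noncomputable def P {n : ℕ} (s : Fin n → Fin 4) :
    Matrix (Fin n → Fin 2) (Fin n → Fin 2) ℂ :=
  Matrix.of fun i j => ∏ k, Q (s k) (i k) (j k)


/-- `A_α(ψ) = d⁻¹ ∑_s ⟨ψ, P_s ψ⟩^(2α)` with `d = 2^n`. -/
noncomputable def A (n α : ℕ) (ψ : (Fin n → Fin 2) → ℂ) : ℝ :=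
  (2 ^ n : ℝ)⁻¹ * ∑ s : Fin n → Fin 4, (star ψ ⬝ᵥ (P s).mulVec ψ).re ^ (2 * α)

/-!
The trace pairing `(M, N) ↦ tr (M N)` is invariant under conjugation by a unitary, and the Pauli
strings satisfy `tr (P_s P_t) = 2 ^ n δ_{st}`. Hence if `C P_s Cᴴ = c_s P_{t s}` for all `s`, then
`c_s c_{s'} δ_{t s, t s'} = δ_{s s'}`: every `c_s` is a sign and `t` is a permutation. Since
`⟨ψ, P_s ψ⟩ = c_s ⟨Cψ, P_{t s} Cψ⟩`, the expectation values of `Cψ` are those of `ψ` up to order and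
sign, and `A_α` only involves their even powers.
-/

section Conjugation

variable {l m R : Type*} [Fintype l] [DecidableEq l] [Fintype m] [CommSemiring R]
  [StarRing R] {U : Matrix m l R}

lemma trace_conj_mul_conj_of_isometry (hU : Uᴴ * U = 1) (M N : Matrix l l R) :
    ((U * M * Uᴴ) * (U * N * Uᴴ)).trace = (M * N).trace :=
  calc ((U * M * Uᴴ) * (U * N * Uᴴ)).trace
    _ = (U * (M * (Uᴴ * U) * N) * Uᴴ).trace := by simp only [Matrix.mul_assoc]
    _ = ((Uᴴ * U) * (M * N)).trace := by
      rw [hU, Matrix.mul_one, Matrix.trace_mul_comm, ← Matrix.mul_assoc, hU]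
    _ = (M * N).trace := by rw [hU, Matrix.one_mul]

lemma star_mulVec_dotProduct_conj_mulVec_of_isometry (hU : Uᴴ * U = 1) (M : Matrix l l R)
    (ψ : l → R) :
    star (U *ᵥ ψ) ⬝ᵥ (U * M * Uᴴ) *ᵥ (U *ᵥ ψ) = star ψ ⬝ᵥ M *ᵥ ψ := by
  have hconj : Uᴴ * (U * M * Uᴴ) * U = M := by
    rw [Matrix.mul_assoc, Matrix.mul_assoc, hU, Matrix.mul_one, ← Matrix.mul_assoc, hU,
      Matrix.one_mul]
  rw [star_mulVec, ← dotProduct_mulVec, mulVec_mulVec, mulVec_mulVec, hconj]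

end Conjugation

section TraceOrthogonal

variable {ι m R : Type*} [DecidableEq ι] [Fintype m] [CommRing R]

/-- The family `E` is orthogonal for the trace pairing `tr (E s * E s')`, each member having the
same square norm `N`. The pairing is bilinear, with no conjugate transpose. -/
def IsTraceOrthogonal (E : ι → Matrix m m R) (N : R) : Prop :=
  ∀ s s', (E s * E s').trace = if s = s' then N else 0

namespace IsTraceOrthogonal

variable [DecidableEq m] [StarRing R] {E : ι → Matrix m m R} {N : R} {U : Matrix m m R}
  {t : ι → ι} {c : ι → R}

lemma mul_ite_eq_ite_of_conj (hE : IsTraceOrthogonal E N) (hU : Uᴴ * U = 1)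
    (h : ∀ s, U * E s * Uᴴ = c s • E (t s)) (s s' : ι) :
    c s * c s' * (if t s = t s' then N else 0) = if s = s' then N else 0 :=
  calc c s * c s' * (if t s = t s' then N else 0)
    _ = ((c s • E (t s)) * (c s' • E (t s'))).trace := by
      rw [← hE (t s) (t s'), Matrix.smul_mul, Matrix.mul_smul, trace_smul, trace_smul, smul_eq_mul,
        smul_eq_mul, mul_assoc]
    _ = (E s * E s').trace := by rw [← h, ← h, trace_conj_mul_conj_of_isometry hU]
    _ = if s = s' then N else 0 := hE s s'

variable [NoZeroDivisors R]

lemma sq_eq_one_of_conj (hE : IsTraceOrthogonal E N) (hN : N ≠ 0) (hU : Uᴴ * U = 1)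
    (h : ∀ s, U * E s * Uᴴ = c s • E (t s)) (s : ι) : c s ^ 2 = 1 := by
  have hs := hE.mul_ite_eq_ite_of_conj hU h s s
  rw [if_pos rfl, if_pos rfl, ← sq] at hs
  exact (mul_eq_right₀ hN).mp hs

lemma injective_of_conj (hE : IsTraceOrthogonal E N) (hN : N ≠ 0) (hU : Uᴴ * U = 1)
    (h : ∀ s, U * E s * Uᴴ = c s • E (t s)) : Function.Injective t := by
  intro s s' hst
  by_contra hne
  have := nontrivial_of_ne N 0 hN
  have hc (r : ι) : c r ≠ 0 := by
    intro hr
    simpa [hr] using hE.sq_eq_one_of_conj hN hU h r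
  have hzero : c s * c s' * N = 0 := by
    simpa only [if_pos hst, if_neg hne] using hE.mul_ite_eq_ite_of_conj hU h s s'
  exact mul_ne_zero (mul_ne_zero (hc s) (hc s')) hN hzero

lemma sum_even_expectation_mulVec [Fintype ι] {β : Type*} [AddCommMonoid β]
    (hE : IsTraceOrthogonal E N) (hN : N ≠ 0) (hU : Uᴴ * U = 1)
    (h : ∀ s, U * E s * Uᴴ = c s • E (t s)) {f : R → β} (hf : f.Even) (ψ : m → R) :
    ∑ s, f (star (U *ᵥ ψ) ⬝ᵥ E s *ᵥ (U *ᵥ ψ)) = ∑ s, f (star ψ ⬝ᵥ E s *ᵥ ψ) := by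
  have ht : Function.Bijective t :=
    Finite.injective_iff_bijective.mp (hE.injective_of_conj hN hU h)
  rw [← ht.sum_comp]
  refine Finset.sum_congr rfl fun s _ ↦ ?_
  have hval : star ψ ⬝ᵥ E s *ᵥ ψ = c s * (star (U *ᵥ ψ) ⬝ᵥ E (t s) *ᵥ (U *ᵥ ψ)) := by
    rw [← star_mulVec_dotProduct_conj_mulVec_of_isometry hU, h, smul_mulVec, dotProduct_smul,
      smul_eq_mul]
  rcases sq_eq_one_iff.mp (hE.sq_eq_one_of_conj hN hU h s) with hc | hc
  · rw [hval, hc, one_mul]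
  · rw [hval, hc, neg_one_mul, hf]

end IsTraceOrthogonal

end TraceOrthogonal

section PiKronecker

variable {κ R : Type*} [Fintype κ] [CommSemiring R] {l m o : κ → Type*}

/-- The Kronecker product of a finite family of matrices, indexed by dependent functions. -/
def piKronecker (M : ∀ k, Matrix (l k) (m k) R) : Matrix (∀ k, l k) (∀ k, m k) R :=
  Matrix.of fun i j ↦ ∏ k, M k (i k) (j k)

variable [DecidableEq κ] [∀ k, Fintype (m k)]

lemma piKronecker_mul (M : ∀ k, Matrix (l k) (m k) R) (N : ∀ k, Matrix (m k) (o k) R) :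
    piKronecker M * piKronecker N = piKronecker fun k ↦ M k * N k := by
  ext i j
  simp only [piKronecker, Matrix.mul_apply, of_apply, ← Finset.prod_mul_distrib,
    Finset.prod_univ_sum, Fintype.piFinset_univ]

lemma trace_piKronecker (M : ∀ k, Matrix (m k) (m k) R) :
    (piKronecker M).trace = ∏ k, (M k).trace := by
  simp only [piKronecker, Matrix.trace, diag_apply, of_apply, Finset.prod_univ_sum,
    Fintype.piFinset_univ]

end PiKronecker

section Pauli

lemma isTraceOrthogonal_Q : IsTraceOrthogonal Q 2 := by
  intro a b
  fin_cases a <;> fin_cases b <;> simp [Q, Matrix.trace_fin_two] <;> norm_num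

lemma P_eq_piKronecker {n : ℕ} (s : Fin n → Fin 4) : P s = piKronecker fun k ↦ Q (s k) :=
  rfl

lemma isTraceOrthogonal_P (n : ℕ) : IsTraceOrthogonal (P (n := n)) (2 ^ n) := by
  intro s t
  rw [P_eq_piKronecker, P_eq_piKronecker, piKronecker_mul, trace_piKronecker]
  simp only [isTraceOrthogonal_Q _ _, Finset.prod_ite_zero, Finset.mem_univ, forall_const,
    funext_iff, Finset.prod_const, Finset.card_univ, Fintype.card_fin]

end Pauli

lemma even_re_pow_two_mul (α : ℕ) : Function.Even fun z : ℂ ↦ z.re ^ (2 * α) := fun z ↦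
  (even_two_mul α).neg_pow z.re

theorem clifford_invariance_general (n α : ℕ) (C : Matrix.unitaryGroup (Fin n → Fin 2) ℂ)
    (hC : ∀ s : Fin n → Fin 4, ∃ t : Fin n → Fin 4, ∃ c : ℂ,
      (C : Matrix (Fin n → Fin 2) (Fin n → Fin 2) ℂ) * P s
          * (C : Matrix (Fin n → Fin 2) (Fin n → Fin 2) ℂ)ᴴ = c • P t)
    (ψ : (Fin n → Fin 2) → ℂ) :
    A n α ((C : Matrix (Fin n → Fin 2) (Fin n → Fin 2) ℂ).mulVec ψ) = A n α ψ := by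
  choose t c h using hC
  exact congrArg ((2 ^ n : ℝ)⁻¹ * ·) <|
    (isTraceOrthogonal_P n).sum_even_expectation_mulVec (pow_ne_zero n two_ne_zero)
      (mem_unitaryGroup_iff'.mp C.2) h (even_re_pow_two_mul α) ψ

theorem clifford_invariance (n α : ℕ) (hα : 1 ≤ α)
    (C : Matrix.unitaryGroup (Fin n → Fin 2) ℂ)
    (hC : ∀ s : Fin n → Fin 4, ∃ t : Fin n → Fin 4,
      ∃ c ∈ ({1, -1, Complex.I, -Complex.I} : Set ℂ),
        (C : Matrix (Fin n → Fin 2) (Fin n → Fin 2) ℂ) * P s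
            * (C : Matrix (Fin n → Fin 2) (Fin n → Fin 2) ℂ)ᴴ = c • P t)
    (ψ : (Fin n → Fin 2) → ℂ) (hψ : star ψ ⬝ᵥ ψ = 1) :
    A n α ((C : Matrix (Fin n → Fin 2) (Fin n → Fin 2) ℂ).mulVec ψ) = A n α ψ :=
  clifford_invariance_general n α C
    (fun s ↦ let ⟨t, c, _, h⟩ := hC s; ⟨t, c, h⟩) ψ
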